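/- For all constants c₁, c₂ > 0 there exists a constant c > 0 such that the following holds. If G, H, W, k, n satisfy Assumption (★) with constant c, then G contains an independent arc-system of size at least c₁·k² and length at least c₂·k^{1/5}. -/

import Mathlib

open Finset

/-- `σ` lists the vertices of `G` in the order of a Hamilton cycle `H`:
it is a bijection from `ZMod n` such that consecutive indices give adjacent vertices. -/
def IsHamOrder {V : Type} [Fintype V] (G : SimpleGraph V) (n : ℕ) (σ : ZMod n → V) : Prop :=
  Function.Bijective σ ∧ ∀ i : ZMod n, G.Adj (σ i) (σ (i + 1))

/-- A vertex is problematic if it has degree at most `2k` or belongs to `W`. -/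
def Problematic {V : Type} [Fintype V] [DecidableEq V] (G : SimpleGraph V)
    [DecidableRel G.Adj] (W : Finset V) (k : ℕ) (v : V) : Prop :=
  G.degree v ≤ 2 * k ∨ v ∈ W

/-- `G` has a cycle of length `ℓ` passing through all vertices of `S`. -/
def HasCycleThrough {V : Type} (G : SimpleGraph V) (ℓ : ℕ) (S : Set V) : Prop :=
  ∃ (u : V) (w : G.Walk u u), w.IsCycle ∧ w.length = ℓ ∧ ∀ x ∈ S, x ∈ w.support

/-- Assumption (★) with constant `c`: `G` is a graph on `n` vertices with Hamilton cycle
(order) `σ`, independence number at most `k`, `W` has at most `20k²` vertices, `G` has no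
cycle of length `n − 1` through all of `W`, and `n ≥ c·k^(11/5)`. -/
def StarAssumption {V : Type} [Fintype V] [DecidableEq V] (G : SimpleGraph V) [DecidableRel G.Adj]
    (n k : ℕ) (σ : ZMod n → V) (W : Finset V) (c : ℝ) : Prop :=
  Fintype.card V = n ∧ IsHamOrder G n σ ∧
  (∀ s : Finset V, (∀ u ∈ s, ∀ v ∈ s, u ≠ v → ¬ G.Adj u v) → s.card ≤ k) ∧
  W.card ≤ 20 * k ^ 2 ∧
  ¬ HasCycleThrough G (n - 1) (W : Set V) ∧
  c * (k : ℝ) ^ ((11 : ℝ) / 5) ≤ (n : ℝ)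

/-- Two vertices are consecutive if they are neighbours on the Hamilton cycle. -/
def Consec {V : Type} (n : ℕ) (σ : ZMod n → V) (u v : V) : Prop :=
  ∃ i : ZMod n, (σ i = u ∧ σ (i + 1) = v) ∨ (σ i = v ∧ σ (i + 1) = u)

/-- A continuous set of vertices: one forming a subpath (interval) of the Hamilton cycle. -/
def ContinuousSet {V : Type} [DecidableEq V] (n : ℕ) (σ : ZMod n → V) (S : Finset V) : Prop :=
  ∃ (i : ZMod n) (m : ℕ), S = (Finset.range m).image (fun j : ℕ => σ (i + (j : ZMod n)))

/-- `B` is a continuous closure of `A`: a minimum-size continuous set containing `A`. -/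
def IsClosure {V : Type} [DecidableEq V] (n : ℕ) (σ : ZMod n → V) (A B : Finset V) : Prop :=
  ContinuousSet n σ B ∧ A ⊆ B ∧
    ∀ B' : Finset V, ContinuousSet n σ B' → A ⊆ B' → B.card ≤ B'.card

/-- An arc-system: a family of arcs together with a choice of continuous closure for each
arc, such that closures of distinct arcs are disjoint, closures contain no problematic
vertex, and no arc contains two consecutive vertices. -/
structure ArcSystem {V : Type} [Fintype V] [DecidableEq V] (G : SimpleGraph V)
    [DecidableRel G.Adj] (n k : ℕ) (σ : ZMod n → V) (W : Finset V) where
  arcs : Finset (Finset V)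
  cl : Finset V → Finset V
  closure_spec : ∀ A ∈ arcs, IsClosure n σ A (cl A)
  closures_disjoint : ∀ A ∈ arcs, ∀ B ∈ arcs, A ≠ B → Disjoint (cl A) (cl B)
  no_problematic : ∀ A ∈ arcs, ∀ v ∈ cl A, ¬ Problematic G W k v
  no_consec : ∀ A ∈ arcs, ∀ u ∈ A, ∀ v ∈ A, u ≠ v → ¬ Consec n σ u v

namespace ArcSystem

variable {V : Type} [Fintype V] [DecidableEq V] {G : SimpleGraph V} [DecidableRel G.Adj]
  {n k : ℕ} {σ : ZMod n → V} {W : Finset V}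

/-- An arc-system is independent if every closure has at most `k` vertices. -/
def Independent (𝒜 : ArcSystem G n k σ W) : Prop :=
  ∀ A ∈ 𝒜.arcs, (𝒜.cl A).card ≤ k

/-- Every arc of the system has at least `l` vertices. -/
def LengthGe (𝒜 : ArcSystem G n k σ W) (l : ℕ) : Prop :=
  ∀ A ∈ 𝒜.arcs, l ≤ A.card

end ArcSystem

/-- A vertex set `s` is `M₂`-free (for `G`) if the subgraph induced by `s`
contains no two vertex-disjoint edges. -/
def M2Free {V : Type} (G : SimpleGraph V) (s : Finset V) : Prop :=
  ¬ ∃ a b x y : V, a ∈ s ∧ b ∈ s ∧ x ∈ s ∧ y ∈ s ∧ G.Adj a b ∧ G.Adj x y ∧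
      a ≠ x ∧ a ≠ y ∧ b ≠ x ∧ b ≠ y

namespace ArcSystem

variable {V : Type} [Fintype V] [DecidableEq V] {G : SimpleGraph V} [DecidableRel G.Adj]
  {n k : ℕ} {σ : ZMod n → V} {W : Finset V}

/-- An arc-system is simple if it is independent and any two distinct arcs induce an
`M₂`-free subgraph of `G`. -/
def Simple (𝒜 : ArcSystem G n k σ W) : Prop :=
  𝒜.Independent ∧ ∀ A ∈ 𝒜.arcs, ∀ B ∈ 𝒜.arcs, A ≠ B → M2Free G (A ∪ B)

end ArcSystem

/-- `G[𝒜]` contains an independent set of size at least `m`. -/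
def HasIndepInArcs {V : Type} [Fintype V] [DecidableEq V] (G : SimpleGraph V)
    [DecidableRel G.Adj] {n k : ℕ} {σ : ZMod n → V} {W : Finset V}
    (𝒜 : ArcSystem G n k σ W) (m : ℕ) : Prop :=
  ∃ I : Finset V, (∀ v ∈ I, ∃ A ∈ 𝒜.arcs, v ∈ A) ∧
    (∀ u ∈ I, ∀ v ∈ I, u ≠ v → ¬ G.Adj u v) ∧ m ≤ I.card

/-- The constants `a_p = 10·3^p`. -/
def aP (p : ℕ) : ℕ := 10 * 3 ^ p

/-- The constants `b_p = 1000^p·4^(p²)`. -/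
def bP (p : ℕ) : ℕ := 1000 ^ p * 4 ^ (p ^ 2)

/-!
A set of vertices of degree at most `2k` is dominated by any of its maximal independent subsets, so
with `W` it leaves `O(k²)` problematic vertices. Cut `H` into blocks of `2t` successive vertices,
where `t ≈ c₂ k^(1/5)`: there are `n / (2t) ≥ const * k²` of them, all but `O(k²)` are free of
problematic vertices, and in each of these every other vertex can be taken as an arc. The closures
have fewer than `2t` vertices, which is at most `k` once `k` is large.

For bounded `k` the assumption (★) is contradictory when `c` is large. Cut `H` into blocks of
`2k + 1` vertices and let two blocks avoiding `W` be joined at position `p` if their `p`-th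
vertices are adjacent. Since independent sets are bounded, applying Ramsey's theorem once for each
position gives two blocks joined at every position. Some chord joins two even positions of the
first block; let the cycle jump along it and pick up the skipped vertices, except the last, in
adjacent pairs through the rungs to the second block. Exactly one vertex, not in `W`, is lost.
-/

section Independence

theorem card_le_indepNum_of_isIndepSet_comap {ι V : Type*} [Finite V] {G : SimpleGraph V}
    {f : ι → V} {T : Finset ι} (hf : Set.InjOn f T) (hT : (G.comap f).IsIndepSet T) :
    #T ≤ G.indepNum := by
  classical
  rw [← card_image_of_injOn hf]
  refine SimpleGraph.IsIndepSet.card_le_indepNum ?_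
  rw [coe_image]
  rintro _ ⟨i, hi, rfl⟩ _ ⟨j, hj, rfl⟩ hij
  exact hT hi hj (ne_of_apply_ne f hij)

theorem exists_lt_adj_of_indepNum_lt_card {ι V : Type*} [LinearOrder ι] [Finite V]
    {G : SimpleGraph V} {f : ι → V} {T : Finset ι} (hf : Set.InjOn f T) (hT : G.indepNum < #T) :
    ∃ i ∈ T, ∃ j ∈ T, i < j ∧ G.Adj (f i) (f j) := by
  by_contra! hno
  refine hT.not_ge (card_le_indepNum_of_isIndepSet_comap hf fun i hi j hj hij hadj => ?_)
  rcases hij.lt_or_gt with h | h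
  · exact hno i hi j hj h hadj
  · exact hno j hj i hi h hadj.symm

theorem card_le_mul_indepNum_of_degree_le {V : Type*} [Fintype V] (G : SimpleGraph V)
    [DecidableRel G.Adj] {D : ℕ} {S : Finset V} (hS : ∀ v ∈ S, G.degree v ≤ D) :
    #S ≤ (D + 1) * G.indepNum := by
  classical
  obtain ⟨I, hI⟩ := (S.powerset.filter fun I : Finset V => G.IsIndepSet I).exists_maximal
    ⟨∅, by simp⟩
  obtain ⟨hIS, hindep⟩ : I ⊆ S ∧ G.IsIndepSet I := by simpa using hI.prop
  have hcover : S ⊆ I.biUnion fun v => insert v (G.neighborFinset v) := by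
    intro v hv
    by_contra hfar
    have hvI : ∀ u ∈ I, v ≠ u ∧ ¬ G.Adj u v := by simpa using hfar
    have hinsert : G.IsIndepSet (insert v I : Finset V) := by
      rw [coe_insert, SimpleGraph.isIndepSet_iff]
      exact hindep.insert fun u hu _ => ⟨fun h => (hvI u hu).2 h.symm, (hvI u hu).2⟩
    have hmem := hI.le_of_ge (y := insert v I)
      (by simpa [insert_subset_iff, hv, hIS] using hinsert) (subset_insert v I)
    exact (hvI v (hmem (mem_insert_self v I))).1 rfl
  calc #S ≤ #(I.biUnion fun v => insert v (G.neighborFinset v)) := card_le_card hcover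
    _ ≤ #I * (D + 1) := card_biUnion_le_card_mul _ _ _ fun v hv =>
        (card_insert_le _ _).trans (Nat.succ_le_succ (hS v (hIS hv)))
    _ ≤ (D + 1) * G.indepNum := by
        rw [mul_comm]
        exact Nat.mul_le_mul_left _ hindep.card_le_indepNum

end Independence

section Ramsey

variable {ι : Type*}

theorem exists_isNClique_or_isNIndepSet (G : SimpleGraph ι) :
    ∀ (s t : ℕ) (S : Finset ι), (s + t).choose s ≤ #S →
      ∃ T ⊆ S, G.IsNClique s T ∨ G.IsNIndepSet t T
  | 0, _, _, _ => ⟨∅, by simp, .inl (by simp)⟩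
  | _ + 1, 0, _, _ => ⟨∅, by simp, .inr (by simp [← SimpleGraph.isNClique_compl])⟩
  | s + 1, t + 1, S, hS => by
    classical
    have hpascal : (s + 1 + (t + 1)).choose (s + 1) =
        (s + (t + 1)).choose s + (s + 1 + t).choose (s + 1) := by
      rw [show s + 1 + (t + 1) = s + (t + 1) + 1 by ring, Nat.choose_succ_succ]
      congr 2
      ring
    rw [hpascal] at hS
    obtain ⟨x, hx⟩ : S.Nonempty := by
      have : 0 < (s + (t + 1)).choose s := Nat.choose_pos (by omega)
      exact card_pos.1 (by omega)
    have hsplit : #{y ∈ S.erase x | G.Adj x y} + #{y ∈ S.erase x | ¬ G.Adj x y} = #S - 1 := by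
      rw [card_filter_add_card_filter_not, card_erase_of_mem hx]
    rcases le_or_gt ((s + (t + 1)).choose s) #{y ∈ S.erase x | G.Adj x y} with hN | hN
    · obtain ⟨T, hT, hclique | hindep⟩ := exists_isNClique_or_isNIndepSet G s (t + 1) _ hN
      · exact ⟨insert x T, by grind, .inl (hclique.insert fun y hy => (mem_filter.1 (hT hy)).2)⟩
      · exact ⟨T, by grind, .inr hindep⟩
    · obtain ⟨T, hT, hclique | hindep⟩ := exists_isNClique_or_isNIndepSet G (s + 1) t
        {y ∈ S.erase x | ¬ G.Adj x y} (by omega)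
      · exact ⟨T, by grind, .inl hclique⟩
      · rw [← SimpleGraph.isNClique_compl] at hindep
        refine ⟨insert x T, by grind, .inr ?_⟩
        rw [← SimpleGraph.isNClique_compl]
        exact hindep.insert fun y hy => by
          rw [SimpleGraph.compl_adj]
          grind

variable (ι) in
theorem exists_common_clique (k s : ℕ) : ∀ L : ℕ, ∃ N : ℕ, ∀ (H : ℕ → SimpleGraph ι)
    (S : Finset ι), N ≤ #S → (∀ p < L, ∀ T ⊆ S, (H p).IsIndepSet T → #T ≤ k) →
      ∃ T ⊆ S, #T = s ∧ ∀ p < L, (H p).IsClique T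
  | 0 => ⟨s, fun _ _ hS _ => by simpa using exists_subset_card_eq hS⟩
  | L + 1 => by
    obtain ⟨N, hN⟩ := exists_common_clique k s L
    refine ⟨(N + (k + 1)).choose N, fun H S hS hindep => ?_⟩
    obtain ⟨T, hTS, hT | hT⟩ := exists_isNClique_or_isNIndepSet (H L) N (k + 1) S hS
    · obtain ⟨U, hUT, hU, hclique⟩ := hN H T hT.card_eq.ge
        fun p hp U hU => hindep p (by omega) U (hU.trans hTS)
      refine ⟨U, hUT.trans hTS, hU, fun p hp => ?_⟩
      rcases Nat.lt_succ_iff_lt_or_eq.1 hp with hp | rfl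
      · exact hclique p hp
      · exact hT.isClique.subset (coe_subset.2 hUT)
    · have := hindep L (by omega) T hTS hT.isIndepSet
      have := hT.card_eq
      omega

end Ramsey

section Cycles

theorem hasCycleThrough_length_of_isChain {V : Type} {G : SimpleGraph V} {L : List V} {S : Set V}
    (hchain : L.IsChain G.Adj) (hnodup : L.Nodup) (hlen : 3 ≤ L.length)
    (hclose : ∀ x ∈ L.getLast?, ∀ y ∈ L.head?, G.Adj x y) (hS : ∀ x ∈ S, x ∈ L) :
    HasCycleThrough G L.length S := by
  have hne : L ≠ [] := by rintro rfl; simp at hlen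
  have hadj : G.Adj (L.getLast hne) (L.head hne) :=
    hclose _ (List.getLast?_eq_getLast_of_ne_nil hne) _ (List.head?_eq_some_head hne)
  have hlength : (SimpleGraph.Walk.cons hadj (.ofSupport L hne hchain)).length = L.length := by
    rw [SimpleGraph.Walk.length_cons, SimpleGraph.Walk.length_ofSupport]
    omega
  refine ⟨_, .cons hadj (.ofSupport L hne hchain), ?_, hlength, fun x hx => ?_⟩
  · rw [SimpleGraph.Walk.isCycle_iff_isPath_tail_and_le_length, hlength]
    refine ⟨?_, hlen⟩
    simpa [SimpleGraph.Walk.isPath_def] using hnodup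
  · rw [SimpleGraph.Walk.support_cons, SimpleGraph.Walk.support_ofSupport]
    exact List.mem_cons_of_mem _ (hS x hx)

/-- The route through the two rows `1, …, 2m` and `d + 1, …, d + 2m` of a ladder that follows the
second row and makes a detour along the edge `2i + 1, 2i + 2` of the first row between `d + 2i + 1`
and `d + 2i + 2`. -/
def zigzag (d : ℕ) : ℕ → List ℕ
  | 0 => []
  | m + 1 => zigzag d m ++ [d + 2 * m + 1, 2 * m + 1, 2 * m + 2, d + 2 * m + 2]

theorem zigzag_perm (d m : ℕ) :
    (zigzag d m).Perm (List.Ico 1 (2 * m + 1) ++ List.Ico (d + 1) (d + 2 * m + 1)) := by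
  induction m with
  | zero => simp [zigzag]
  | succ m ih =>
    rw [List.perm_iff_count] at ih ⊢
    have h₁ : List.Ico 1 (2 * (m + 1) + 1) = List.Ico 1 (2 * m + 1) ++ [2 * m + 1, 2 * m + 2] := by
      rw [show 2 * (m + 1) + 1 = 2 * m + 1 + 1 + 1 by ring, List.Ico.succ_top (by omega),
        List.Ico.succ_top (by omega), List.append_assoc]
      rfl
    have h₂ : List.Ico (d + 1) (d + 2 * (m + 1) + 1) =
        List.Ico (d + 1) (d + 2 * m + 1) ++ [d + 2 * m + 1, d + 2 * m + 2] := by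
      rw [show d + 2 * (m + 1) + 1 = d + 2 * m + 1 + 1 + 1 by ring, List.Ico.succ_top (by omega),
        List.Ico.succ_top (by omega), List.append_assoc]
      rfl
    intro x
    have := ih x
    simp only [zigzag, h₁, h₂, List.count_append, List.count_cons, List.count_nil] at this ⊢
    omega

theorem getLast?_cons_zigzag (d m : ℕ) : (d :: zigzag d m).getLast? = some (d + 2 * m) := by
  cases m with
  | zero => simp [zigzag]
  | succ m => rw [zigzag, ← List.cons_append, List.getLast?_append]; rfl

theorem isChain_cons_zigzag {r : ℕ → ℕ → Prop} {d m : ℕ} (hstep : ∀ i, r i (i + 1))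
    (hdown : ∀ i < m, r (d + 2 * i + 1) (2 * i + 1))
    (hup : ∀ i < m, r (2 * i + 2) (d + 2 * i + 2)) : (d :: zigzag d m).IsChain r := by
  induction m with
  | zero => simp [zigzag]
  | succ m ih =>
    have hprev := ih (fun i hi => hdown i (by omega)) fun i hi => hup i (by omega)
    have hnext : [d + 2 * m + 1, 2 * m + 1, 2 * m + 2, d + 2 * m + 2].IsChain r := by
      simpa using ⟨hdown m (by omega), hstep _, hup m (by omega)⟩
    refine hprev.append hnext ?_
    simpa [getLast?_cons_zigzag] using hstep _

theorem head?_listIco {a b : ℕ} (h : a < b) : (List.Ico a b).head? = some a := by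
  rw [List.Ico.eq_cons h, List.head?_cons]

theorem getLast?_listIco {a b : ℕ} (h : a < b) : (List.Ico a b).getLast? = some (b - 1) := by
  obtain ⟨c, rfl⟩ := Nat.exists_eq_add_of_lt h
  rw [List.Ico.succ_top (by omega), List.getLast?_append]
  rfl

/-- The positions `0, …, n - 1` of a Hamilton cycle other than `2m + 1`, in the order in which they
are visited by the cycle that uses the chord from `0` to `2m + 2` and picks up `1, …, 2m` from the
stretch `d + 1, …, d + 2m`. -/
def ladderTour (n m d : ℕ) : List ℕ :=
  0 :: (List.Ico (2 * m + 2) d ++ (d :: zigzag d m) ++ List.Ico (d + 2 * m + 1) n)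

theorem cons_ladderTour_perm_range {n m d : ℕ} (hmd : 2 * m + 2 ≤ d) (hdn : d + 2 * m < n) :
    ((2 * m + 1) :: ladderTour n m d).Perm (List.range n) := by
  have hsplit : List.range n = 0 :: (List.Ico 1 (2 * m + 1) ++ ((2 * m + 1) ::
      (List.Ico (2 * m + 2) d ++ (d :: (List.Ico (d + 1) (d + 2 * m + 1) ++
        List.Ico (d + 2 * m + 1) n))))) := by
    rw [List.Ico.append_consecutive (by omega) (by omega), ← List.Ico.eq_cons (by omega),
      List.Ico.append_consecutive (by omega) (by omega), ← List.Ico.eq_cons (by omega),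
      List.Ico.append_consecutive (by omega) (by omega), ← List.Ico.eq_cons (by omega),
      List.Ico.zero_bot]
  have hzigzag := zigzag_perm d m
  rw [List.perm_iff_count] at hzigzag
  rw [hsplit, ladderTour, List.perm_iff_count]
  intro x
  have := hzigzag x
  simp only [List.count_append, List.count_cons] at this ⊢
  omega

theorem isChain_ladderTour {r : ℕ → ℕ → Prop} {n m d : ℕ} (hmd : 2 * m + 2 < d)
    (hdn : d + 2 * m + 1 < n) (hstep : ∀ i, r i (i + 1)) (hchord : r 0 (2 * m + 2))
    (hdown : ∀ i < m, r (d + 2 * i + 1) (2 * i + 1))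
    (hup : ∀ i < m, r (2 * i + 2) (d + 2 * i + 2)) : (ladderTour n m d).IsChain r := by
  have hIco : ∀ a b, (List.Ico a b).IsChain r := fun a b =>
    (List.Ico.isChain_succ a b).imp fun i j h => by subst h; exact hstep i
  refine .cons (((hIco _ _).append (isChain_cons_zigzag hstep hdown hup) ?_).append
    (hIco _ _) ?_) ?_
  · rw [getLast?_listIco hmd]
    simpa [Nat.sub_add_cancel (show 1 ≤ d by omega)] using hstep (d - 1)
  · rw [List.getLast?_append, getLast?_cons_zigzag, head?_listIco hdn]
    simpa using hstep _
  · rw [List.append_assoc, List.head?_append, head?_listIco hmd]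
    simpa using hchord

theorem getLast?_ladderTour {n m d : ℕ} (hdn : d + 2 * m + 1 < n) :
    (ladderTour n m d).getLast? = some (n - 1) := by
  rw [ladderTour, ← List.cons_append, List.getLast?_append, getLast?_listIco hdn]
  rfl

theorem injOn_translate {V : Type*} {n : ℕ} {σ : ZMod n → V} (hσ : Function.Injective σ)
    (s : ZMod n) : Set.InjOn (fun a : ℕ => σ (s + a)) (Set.Iio n) :=
  fun _ ha _ hb h => CharP.natCast_injOn_Iio (ZMod n) n ha hb (add_left_cancel (hσ h))

theorem exists_translate_eq {V : Type*} {n : ℕ} [NeZero n] {σ : ZMod n → V}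
    (hσ : Function.Surjective σ) (s : ZMod n) (v : V) : ∃ a < n, σ (s + (a : ℕ)) = v := by
  obtain ⟨z, rfl⟩ := hσ v
  exact ⟨(z - s).val, ZMod.val_lt _, by simp⟩

variable {V : Type} [Fintype V] {G : SimpleGraph V} {n : ℕ} {σ : ZMod n → V}

theorem IsHamOrder.hasCycleThrough_of_ladder (hσ : IsHamOrder G n σ) {S : Set V} {s : ZMod n}
    {m d : ℕ} (hmd : 2 * m + 2 < d) (hdn : d + 2 * m + 1 < n)
    (hchord : G.Adj (σ s) (σ (s + (2 * m + 2 : ℕ))))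
    (hrungs : ∀ r : ℕ, r ≤ 2 * m → G.Adj (σ (s + r)) (σ (s + (d + r : ℕ))))
    (hS : σ (s + (2 * m + 1 : ℕ)) ∉ S) : HasCycleThrough G (n - 1) S := by
  have : NeZero n := ⟨by omega⟩
  set τ : ℕ → V := fun a => σ (s + a) with hτ
  have hperm := cons_ladderTour_perm_range hmd.le (n := n) (by omega)
  have hlen : ((ladderTour n m d).map τ).length = n - 1 := by
    have := hperm.length_eq
    rw [List.length_cons, List.length_range] at this
    rw [List.length_map]
    omega
  have hstep : ∀ i, G.Adj (τ i) (τ (i + 1)) := fun i => by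
    simpa [hτ, add_assoc] using hσ.2 (s + i)
  have hchain : ((ladderTour n m d).map τ).IsChain G.Adj :=
    (List.isChain_map τ).2 (isChain_ladderTour hmd hdn hstep (by simpa [hτ] using hchord)
      (fun i hi => (hrungs (2 * i + 1) (by omega)).symm)
      fun i hi => hrungs (2 * i + 2) (by omega))
  have hnodup : (((2 * m + 1) :: ladderTour n m d).map τ).Nodup :=
    (hperm.map τ).nodup_iff.2 (List.nodup_range.map_on fun i hi j hj =>
      injOn_translate hσ.1.1 s (List.mem_range.1 hi) (List.mem_range.1 hj))
  rw [← hlen]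
  refine hasCycleThrough_length_of_isChain hchain (List.nodup_cons.1 hnodup).2 (by omega) ?_ ?_
  · have hwrap : τ (n - 1 + 1) = τ 0 := by simp [hτ, Nat.sub_add_cancel (show 1 ≤ n by omega)]
    have := hstep (n - 1)
    rw [hwrap] at this
    have hhead : ((ladderTour n m d).map τ).head? = some (τ 0) := rfl
    rw [List.getLast?_map, getLast?_ladderTour hdn, hhead]
    simpa using this
  · intro v hv
    obtain ⟨a, ha, rfl⟩ := exists_translate_eq hσ.1.2 s v
    rcases List.mem_cons.1 (hperm.mem_iff.2 (List.mem_range.2 ha)) with rfl | haL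
    · exact absurd hv hS
    · exact List.mem_map_of_mem haL

end Cycles

section Blocks

variable {V : Type} {n K : ℕ}

/-- The vertex at position `a` of the `j`-th block when the cyclic order `σ` is cut, starting from
`σ 0`, into blocks of `K` successive vertices. -/
def blockVertex (σ : ZMod n → V) (K j a : ℕ) : V :=
  σ (j * K + a : ℕ)

/-- The indices of the blocks of `K` successive vertices that avoid `P`. The at most `K - 1`
vertices left over after the last complete block belong to no block. -/
def cleanBlocks [DecidableEq V] (σ : ZMod n → V) (K : ℕ) (P : Finset V) : Finset ℕ :=
  {j ∈ range (n / K) | ∀ a < K, blockVertex σ K j a ∉ P}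

theorem mem_cleanBlocks [DecidableEq V] {σ : ZMod n → V} {P : Finset V} {j : ℕ} :
    j ∈ cleanBlocks σ K P ↔ j < n / K ∧ ∀ a < K, blockVertex σ K j a ∉ P := by
  rw [cleanBlocks, mem_filter, mem_range]

theorem mul_add_lt_of_lt_div {j a : ℕ} (hj : j < n / K) (ha : a < K) : j * K + a < n := by
  have := Nat.div_mul_le_self n K
  nlinarith

theorem blockVertex_eq_translate (σ : ZMod n → V) (K j a : ℕ) :
    blockVertex σ K j a = σ ((j * K : ℕ) + (a : ℕ)) := by
  rw [blockVertex, Nat.cast_add]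

theorem blockVertex_inj {σ : ZMod n → V} (hσ : Function.Injective σ) {i j a b : ℕ}
    (hi : i < n / K) (hj : j < n / K) (ha : a < K) (hb : b < K) :
    blockVertex σ K i a = blockVertex σ K j b ↔ i = j ∧ a = b := by
  refine ⟨fun h => ?_, by rintro ⟨rfl, rfl⟩; rfl⟩
  have heq : i * K + a = j * K + b := CharP.natCast_injOn_Iio (ZMod n) n
    (mul_add_lt_of_lt_div hi ha) (mul_add_lt_of_lt_div hj hb) (hσ h)
  have hdiv := congrArg (· / K) heq
  have hmod := congrArg (· % K) heq
  have hK : 0 < K := by omega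
  simp only [mul_comm _ K, Nat.mul_add_div hK, Nat.div_eq_of_lt ha, Nat.div_eq_of_lt hb] at hdiv
  simp only [Nat.mul_add_mod', Nat.mod_eq_of_lt ha, Nat.mod_eq_of_lt hb] at hmod
  exact ⟨hdiv, hmod⟩

theorem div_le_card_cleanBlocks_add [DecidableEq V] {σ : ZMod n → V} (hσ : Function.Injective σ)
    (K : ℕ) (P : Finset V) : n / K ≤ #(cleanBlocks σ K P) + #P := by
  have hbad : #{j ∈ range (n / K) | ¬ ∀ a < K, blockVertex σ K j a ∉ P} ≤ #P := by
    refine card_le_card_of_forall_subsingleton (fun j v => ∃ a < K, blockVertex σ K j a = v)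
      (fun j hj => ?_) ?_
    · simpa [and_comm] using (mem_filter.1 hj).2
    · rintro v - i ⟨hi, a, ha, rfl⟩ j ⟨hj, b, hb, hab⟩
      have hi := mem_range.1 (mem_filter.1 hi).1
      have hj := mem_range.1 (mem_filter.1 hj).1
      exact ((blockVertex_inj hσ hj hi hb ha).1 hab).1.symm
  calc n / K = #(range (n / K)) := (card_range _).symm
    _ = _ := (card_filter_add_card_filter_not (fun j => ∀ a < K, blockVertex σ K j a ∉ P)).symm
    _ ≤ _ := Nat.add_le_add_left hbad _

variable [Fintype V] {G : SimpleGraph V} {σ : ZMod n → V}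

theorem IsHamOrder.hasCycleThrough_of_joined_blocks (hσ : IsHamOrder G n σ) {S : Set V} {i j : ℕ}
    (hK : 2 * G.indepNum + 1 ≤ K) (hij : i < j) (hj : j < n / K)
    (hjoin : ∀ a < K, G.Adj (blockVertex σ K i a) (blockVertex σ K j a))
    (hS : ∀ a < K, blockVertex σ K i a ∉ S) : HasCycleThrough G (n - 1) S := by
  have hi : i < n / K := hij.trans hj
  obtain ⟨a, -, b, hb, hab, hadj⟩ : ∃ a ∈ range (G.indepNum + 1), ∃ b ∈ range (G.indepNum + 1),
      a < b ∧ G.Adj (blockVertex σ K i (2 * a)) (blockVertex σ K i (2 * b)) := by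
    refine exists_lt_adj_of_indepNum_lt_card (fun a ha b hb hab => ?_) (by simp)
    have ha := mem_range.1 (mem_coe.1 ha)
    have hb := mem_range.1 (mem_coe.1 hb)
    have := ((blockVertex_inj hσ.1.1 hi hi (by omega) (by omega)).1 hab).2
    omega
  have hb := mem_range.1 hb
  obtain ⟨m, rfl⟩ : ∃ m, b = a + m + 1 := Nat.exists_eq_add_of_lt hab
  obtain ⟨e, rfl⟩ : ∃ e, j = i + e + 1 := Nat.exists_eq_add_of_lt hij
  have hlast := mul_add_lt_of_lt_div hj (show 2 * (a + m + 1) < K by omega)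
  have hd : (i + e + 1) * K = i * K + (e + 1) * K := by ring
  have hKd : K ≤ (e + 1) * K := Nat.le_mul_of_pos_left K e.succ_pos
  have hrow (r : ℕ) : σ ((i * K + 2 * a : ℕ) + (r : ℕ)) = blockVertex σ K i (2 * a + r) := by
    rw [blockVertex, ← Nat.cast_add, add_assoc]
  have hrow' (r : ℕ) : σ ((i * K + 2 * a : ℕ) + ((e + 1) * K + r : ℕ)) =
      blockVertex σ K (i + e + 1) (2 * a + r) := by
    rw [blockVertex, ← Nat.cast_add, hd]
    congr 2
    ring
  refine hσ.hasCycleThrough_of_ladder (s := (i * K + 2 * a : ℕ)) (m := m) (d := (e + 1) * K)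
    (by omega) (by omega) ?_ (fun r hr => ?_) ?_
  · rw [hrow, show 2 * a + (2 * m + 2) = 2 * (a + m + 1) by ring]
    exact hadj
  · rw [hrow, hrow']
    exact hjoin _ (by omega)
  · rw [hrow]
    exact hS _ (by omega)

theorem exists_hasCycleThrough_of_le (k w : ℕ) : ∃ N : ℕ, ∀ (V : Type) [Fintype V]
    (G : SimpleGraph V) (n : ℕ) (σ : ZMod n → V) (W : Finset V), IsHamOrder G n σ →
      G.indepNum ≤ k → #W ≤ w → N ≤ n → HasCycleThrough G (n - 1) (W : Set V) := by
  obtain ⟨M, hM⟩ := exists_common_clique ℕ k 2 (2 * k + 1)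
  refine ⟨(M + w) * (2 * k + 1), fun V _ G n σ W hσ hk hW hn => ?_⟩
  classical
  have hclean : M ≤ #(cleanBlocks σ (2 * k + 1) W) := by
    have := (Nat.le_div_iff_mul_le (by omega)).2 hn
    have := div_le_card_cleanBlocks_add hσ.1.1 (2 * k + 1) W
    omega
  obtain ⟨T, hT, hcard, hclique⟩ :=
    hM (fun a => G.comap fun j => blockVertex σ (2 * k + 1) j a) _ hclean fun a ha T hT hindep =>
      (card_le_indepNum_of_isIndepSet_comap (fun i hi j hj hij => ((blockVertex_inj hσ.1.1
        (mem_cleanBlocks.1 (hT hi)).1 (mem_cleanBlocks.1 (hT hj)).1 ha ha).1 hij).1) hindep).trans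
        hk
  obtain ⟨i, hi, j, hj, hij⟩ : ∃ i ∈ T, ∃ j ∈ T, i < j := by
    obtain ⟨i, hi, j, hj, hne⟩ := one_lt_card.1 (show 1 < #T by omega)
    rcases hne.lt_or_gt with h | h
    exacts [⟨i, hi, j, hj, h⟩, ⟨j, hj, i, hi, h⟩]
  exact hσ.hasCycleThrough_of_joined_blocks (by omega) hij (mem_cleanBlocks.1 (hT hj)).1
    (fun a ha => hclique a ha hi hj hij.ne) (mem_cleanBlocks.1 (hT hi)).2

end Blocks

section Arcs

/-- The continuous set formed by `m` successive vertices starting from `σ i`. -/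
def interval {V : Type} [DecidableEq V] {n : ℕ} (σ : ZMod n → V) (i : ZMod n) (m : ℕ) : Finset V :=
  (range m).image fun a : ℕ => σ (i + a)

/-- The arc formed by every other vertex, starting from `σ i`, until there are `t` of them. -/
def alternateArc {V : Type} [DecidableEq V] {n : ℕ} (σ : ZMod n → V) (i : ZMod n) (t : ℕ) :
    Finset V :=
  (range t).image fun a : ℕ => σ (i + (2 * a : ℕ))

section

variable {V : Type} [DecidableEq V] {n : ℕ} {σ : ZMod n → V}

theorem card_interval (hσ : Function.Injective σ) (i : ZMod n) {m : ℕ} (hm : m ≤ n) :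
    #(interval σ i m) = m := by
  rw [interval, card_image_of_injOn, card_range]
  exact (injOn_translate hσ i).mono fun a ha => (mem_range.1 ha).trans_le hm

theorem card_alternateArc (hσ : Function.Injective σ) (i : ZMod n) {t : ℕ} (ht : 2 * t ≤ n) :
    #(alternateArc σ i t) = t := by
  rw [alternateArc, card_image_of_injOn, card_range]
  intro a ha b hb hab
  have ha := mem_range.1 (mem_coe.1 ha)
  have hb := mem_range.1 (mem_coe.1 hb)
  have := injOn_translate hσ i (Set.mem_Iio.2 (by omega)) (Set.mem_Iio.2 (by omega)) hab
  omega

theorem alternateArc_subset_interval (σ : ZMod n → V) (i : ZMod n) (t : ℕ) :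
    alternateArc σ i t ⊆ interval σ i (2 * t - 1) := by
  intro v hv
  obtain ⟨a, ha, rfl⟩ := mem_image.1 hv
  have := mem_range.1 ha
  exact mem_image.2 ⟨2 * a, mem_range.2 (by omega), rfl⟩

theorem le_of_alternateArc_subset_interval (hσ : Function.Injective σ) {i j : ZMod n} {t m : ℕ}
    (ht : 4 * t ≤ n) (hsub : alternateArc σ i t ⊆ interval σ j m) : 2 * t - 1 ≤ m := by
  rcases t.eq_zero_or_pos with rfl | hpos
  · simp
  by_contra! hm
  have hmem : ∀ a < t, ∃ b < m, j + (b : ℕ) = i + (2 * a : ℕ) := fun a ha => by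
    obtain ⟨b, hb, h⟩ := mem_image.1 (hsub (mem_image_of_mem _ (mem_range.2 ha)))
    exact ⟨b, mem_range.1 hb, hσ h⟩
  obtain ⟨a, ha, hai⟩ := hmem 0 hpos
  obtain ⟨b, hb, hbi⟩ := hmem (t - 1) (by omega)
  have hab : ((a + 2 * (t - 1) : ℕ) : ZMod n) = (b : ℕ) := by
    apply add_left_cancel (a := j)
    rw [hbi, Nat.cast_add, ← add_assoc, hai, Nat.mul_zero, Nat.cast_zero, add_zero]
  have := CharP.natCast_injOn_Iio (ZMod n) n (Set.mem_Iio.2 (by omega)) (Set.mem_Iio.2 (by omega))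
    hab
  omega

theorem isClosure_alternateArc (hσ : Function.Injective σ) (i : ZMod n) {t : ℕ} (ht : 4 * t ≤ n) :
    IsClosure n σ (alternateArc σ i t) (interval σ i (2 * t - 1)) := by
  refine ⟨⟨i, _, rfl⟩, alternateArc_subset_interval σ i t, ?_⟩
  rintro _ ⟨j, m, rfl⟩ hsub
  have hm := le_of_alternateArc_subset_interval hσ ht hsub
  calc #(interval σ i (2 * t - 1)) = #(interval σ j (2 * t - 1)) := by
        rw [card_interval hσ i (by omega), card_interval hσ j (by omega)]
    _ ≤ #(interval σ j m) := card_le_card (image_subset_image (range_mono hm))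

theorem not_consec_of_mem_alternateArc (hσ : Function.Injective σ) {i : ZMod n} {t : ℕ}
    (ht : 2 * t ≤ n) {u v : V} (hu : u ∈ alternateArc σ i t) (hv : v ∈ alternateArc σ i t) :
    ¬ Consec n σ u v := by
  have hparity : ∀ a < t, ∀ b < t, ∀ z, σ z = σ (i + (2 * a : ℕ)) →
      σ (z + 1) ≠ σ (i + (2 * b : ℕ)) := by
    intro a ha b hb z hz hz'
    have hab : σ (i + (2 * a + 1 : ℕ)) = σ (i + (2 * b : ℕ)) := by
      rw [← hz', hσ hz, Nat.cast_add, Nat.cast_one, add_assoc]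
    have := injOn_translate hσ i (Set.mem_Iio.2 (by omega)) (Set.mem_Iio.2 (by omega)) hab
    omega
  obtain ⟨a, ha, rfl⟩ := mem_image.1 hu
  obtain ⟨b, hb, rfl⟩ := mem_image.1 hv
  rintro ⟨z, ⟨h, h'⟩ | ⟨h, h'⟩⟩
  · exact hparity a (mem_range.1 ha) b (mem_range.1 hb) z h h'
  · exact hparity b (mem_range.1 hb) a (mem_range.1 ha) z h h'

theorem mem_interval_block {K j m : ℕ} {v : V} :
    v ∈ interval σ (j * K : ℕ) m ↔ ∃ a < m, blockVertex σ K j a = v := by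
  simp only [interval, mem_image, mem_range, blockVertex_eq_translate]

theorem disjoint_interval_block (hσ : Function.Injective σ) {K i j m : ℕ} (hi : i < n / K)
    (hj : j < n / K) (hij : i ≠ j) (hm : m ≤ K) :
    Disjoint (interval σ (i * K : ℕ) m) (interval σ (j * K : ℕ) m) := by
  refine disjoint_left.2 fun v hvi hvj => ?_
  obtain ⟨a, ha, rfl⟩ := mem_interval_block.1 hvi
  obtain ⟨b, hb, hab⟩ := mem_interval_block.1 hvj
  exact hij ((blockVertex_inj hσ hj hi (hb.trans_le hm) (ha.trans_le hm)).1 hab).1.symm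

end

variable {V : Type} [Fintype V] [DecidableEq V] {G : SimpleGraph V} [DecidableRel G.Adj]
  {n k : ℕ} {σ : ZMod n → V} {W : Finset V}

theorem ArcSystem.exists_of_family {ι : Type*} {S : Finset ι} {arc span : ι → Finset V}
    (hclosure : ∀ j ∈ S, IsClosure n σ (arc j) (span j))
    (hdisjoint : ∀ i ∈ S, ∀ j ∈ S, i ≠ j → Disjoint (span i) (span j))
    (hnonempty : ∀ j ∈ S, (arc j).Nonempty)
    (hproblematic : ∀ j ∈ S, ∀ v ∈ span j, ¬ Problematic G W k v)
    (hconsec : ∀ j ∈ S, ∀ u ∈ arc j, ∀ v ∈ arc j, ¬ Consec n σ u v) :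
    ∃ 𝒜 : ArcSystem G n k σ W,
      𝒜.arcs = S.image arc ∧ #𝒜.arcs = #S ∧ ∀ j ∈ S, 𝒜.cl (arc j) = span j := by
  have hinj : Set.InjOn arc S := fun i hi j hj hij => by
    by_contra hne
    obtain ⟨v, hv⟩ := hnonempty i hi
    exact disjoint_left.1 (hdisjoint i hi j hj hne) ((hclosure i hi).2.1 hv)
      ((hclosure j hj).2.1 (hij ▸ hv))
  obtain ⟨cl, hcl⟩ : ∃ cl : Finset V → Finset V, ∀ j ∈ S, cl (arc j) = span j := by
    rcases S.eq_empty_or_nonempty with rfl | ⟨j, -⟩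
    · exact ⟨id, by simp⟩
    · have : Nonempty ι := ⟨j⟩
      exact ⟨span ∘ Function.invFunOn arc S, fun j hj => congrArg span (hinj.leftInvOn_invFunOn hj)⟩
  refine ⟨⟨S.image arc, cl, ?_, ?_, ?_, ?_⟩, rfl, card_image_of_injOn hinj, hcl⟩
  · refine forall_mem_image.2 fun j hj => ?_
    rw [hcl j hj]
    exact hclosure j hj
  · refine forall_mem_image.2 fun i hi => forall_mem_image.2 fun j hj hij => ?_
    rw [hcl i hi, hcl j hj]
    exact hdisjoint i hi j hj (ne_of_apply_ne arc hij)
  · refine forall_mem_image.2 fun j hj => ?_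
    rw [hcl j hj]
    exact hproblematic j hj
  · exact forall_mem_image.2 fun j hj u hu v hv _ => hconsec j hj u hu v hv

theorem card_problematic_le (G : SimpleGraph V) [DecidableRel G.Adj] (W : Finset V) (k : ℕ)
    [DecidablePred (Problematic G W k)] :
    #{v | Problematic G W k v} ≤ (2 * k + 1) * G.indepNum + #W := by
  have hsub : ({v | Problematic G W k v} : Finset V) ⊆
      ({v | G.degree v ≤ 2 * k} : Finset V) ∪ W := by
    intro v hv
    rw [mem_union, mem_filter_univ]
    exact (mem_filter.1 hv).2
  calc _ ≤ _ := (card_le_card hsub).trans (card_union_le _ _)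
    _ ≤ _ := Nat.add_le_add_right
        (card_le_mul_indepNum_of_degree_le G fun v hv => (mem_filter.1 hv).2) _

theorem ArcSystem.exists_independent (hσ : Function.Injective σ) {t : ℕ} (ht : 1 ≤ t)
    (htk : 2 * t ≤ k) (htn : 4 * t ≤ n) :
    ∃ 𝒜 : ArcSystem G n k σ W, 𝒜.Independent ∧
      n / (2 * t) ≤ #𝒜.arcs + ((2 * k + 1) * G.indepNum + #W) ∧ ∀ A ∈ 𝒜.arcs, #A = t := by
  classical
  set P : Finset V := {v | Problematic G W k v} with hP
  have hlt : ∀ j ∈ cleanBlocks σ (2 * t) P, j < n / (2 * t) := fun j hj => (mem_cleanBlocks.1 hj).1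
  obtain ⟨𝒜, harcs, hcard, hcl⟩ := ArcSystem.exists_of_family (G := G) (k := k) (W := W)
    (S := cleanBlocks σ (2 * t) P) (arc := fun j => alternateArc σ (j * (2 * t) : ℕ) t)
    (span := fun j => interval σ (j * (2 * t) : ℕ) (2 * t - 1))
    (fun j _ => isClosure_alternateArc hσ _ htn)
    (fun i hi j hj hij => disjoint_interval_block hσ (hlt i hi) (hlt j hj) hij (by omega))
    (fun j _ => card_pos.1 (by rw [card_alternateArc hσ _ (by omega)]; exact ht))
    (fun j hj v hv => by
      obtain ⟨a, ha, rfl⟩ := mem_interval_block.1 hv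
      simpa [hP] using (mem_cleanBlocks.1 hj).2 a (by omega))
    (fun j _ u hu v hv => not_consec_of_mem_alternateArc hσ (by omega) hu hv)
  refine ⟨𝒜, ?_, ?_, ?_⟩
  · unfold ArcSystem.Independent
    rw [harcs]
    refine forall_mem_image.2 fun j hj => ?_
    rw [hcl j hj, card_interval hσ _ (by omega)]
    omega
  · rw [hcard]
    exact (div_le_card_cleanBlocks_add hσ (2 * t) P).trans
      (Nat.add_le_add_left (card_problematic_le G W k) _)
  · rw [harcs]
    exact forall_mem_image.2 fun j _ => card_alternateArc hσ _ (by omega)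

end Arcs

section Numerics

theorem rpow_eleven_fifths (k : ℕ) :
    (k : ℝ) ^ ((11 : ℝ) / 5) = (k : ℝ) ^ 2 * (k : ℝ) ^ ((1 : ℝ) / 5) := by
  rw [← Real.rpow_natCast, ← Real.rpow_add_of_nonneg (by positivity) (by norm_num) (by norm_num)]
  norm_num

theorem natCeil_mul_le {c x : ℝ} (hc : 0 ≤ c) (hx : 1 ≤ x) : (⌈c * x⌉₊ : ℝ) ≤ (c + 1) * x := by
  have := (Nat.ceil_lt_add_one (show 0 ≤ c * x by positivity)).le
  linarith

theorem exists_two_mul_natCeil_le {c : ℝ} (hc : 0 ≤ c) :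
    ∃ k₀ : ℕ, ∀ k ≥ k₀, 1 ≤ k → 2 * ⌈c * (k : ℝ) ^ ((1 : ℝ) / 5)⌉₊ ≤ k := by
  refine ⟨⌈(2 * (c + 1)) ^ 5⌉₊, fun k hk hk1 => ?_⟩
  set x : ℝ := (k : ℝ) ^ ((1 : ℝ) / 5) with hx
  have hx1 : 1 ≤ x := Real.one_le_rpow (by exact_mod_cast hk1) (by norm_num)
  have hx5 : x ^ 5 = k := by
    rw [hx, ← Real.rpow_natCast, ← Real.rpow_mul k.cast_nonneg]
    norm_num
  have hcx : 2 * (c + 1) ≤ x := by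
    refine le_of_pow_le_pow_left₀ (n := 5) (by norm_num) (by positivity) ?_
    rw [hx5]
    exact Nat.ceil_le.1 hk
  have : (2 * ⌈c * x⌉₊ : ℝ) ≤ k := calc
    (2 * ⌈c * x⌉₊ : ℝ) ≤ 2 * (c + 1) * x := by linarith [natCeil_mul_le hc hx1]
    _ ≤ x ^ 2 := by rw [sq]; gcongr
    _ ≤ x ^ 5 := pow_le_pow_right₀ hx1 (by norm_num)
    _ = k := hx5
  exact_mod_cast this

end Numerics

section Assumption

variable {V : Type} [Fintype V] [DecidableEq V] {G : SimpleGraph V} [DecidableRel G.Adj]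
  {n k : ℕ} {σ : ZMod n → V} {W : Finset V} {c : ℝ}

theorem StarAssumption.indepNum_le (h : StarAssumption G n k σ W c) : G.indepNum ≤ k := by
  obtain ⟨s, hs⟩ := G.exists_isNIndepSet_indepNum
  exact hs.card_eq ▸ h.2.2.1 s fun u hu v hv huv => hs.isIndepSet hu hv huv

theorem StarAssumption.one_le (h : StarAssumption G n k σ W c) : 1 ≤ k := by
  simpa using h.2.2.1 {σ 0} (by simp)

theorem exists_forall_not_starAssumption_of_lt (k₀ : ℕ) : ∃ N : ℕ, ∀ (V : Type) [Fintype V]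
    [DecidableEq V] (G : SimpleGraph V) [DecidableRel G.Adj] (n k : ℕ) (σ : ZMod n → V)
    (W : Finset V) (c : ℝ), k < k₀ → N ≤ c → ¬ StarAssumption G n k σ W c := by
  obtain ⟨N, hN⟩ := exists_hasCycleThrough_of_le k₀ (20 * k₀ ^ 2)
  refine ⟨N, fun V _ _ G _ n k σ W c hk hc h => ?_⟩
  have hW : #W ≤ 20 * k₀ ^ 2 := h.2.2.2.1.trans (by gcongr)
  have hn : (N : ℝ) ≤ n := calc
    (N : ℝ) ≤ c := hc
    _ ≤ c * (k : ℝ) ^ ((11 : ℝ) / 5) := le_mul_of_one_le_right (N.cast_nonneg.trans hc)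
        (Real.one_le_rpow (by exact_mod_cast h.one_le) (by norm_num))
    _ ≤ n := h.2.2.2.2.2
  exact h.2.2.2.2.1 (hN V G n σ W h.2.1 (h.indepNum_le.trans hk.le) hW (by exact_mod_cast hn))

theorem StarAssumption.exists_arcSystem_card_eq (h : StarAssumption G n k σ W c) {c₁ : ℝ}
    (hc₁ : 0 ≤ c₁) {t : ℕ} (ht : 1 ≤ t) (htk : 2 * t ≤ k)
    (htn : (c₁ + 24) * (k : ℝ) ^ 2 * (2 * t) ≤ n) :
    ∃ 𝒜 : ArcSystem G n k σ W, 𝒜.Independent ∧ c₁ * (k : ℝ) ^ 2 ≤ #𝒜.arcs ∧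
      ∀ A ∈ 𝒜.arcs, #A = t := by
  have hk : (1 : ℝ) ≤ (k : ℝ) ^ 2 := one_le_pow₀ (by exact_mod_cast h.one_le)
  have ht4 : 4 * t ≤ n := by
    have : (4 * t : ℝ) ≤ n := by nlinarith [mul_nonneg hc₁ (zero_le_one.trans hk)]
    exact_mod_cast this
  obtain ⟨𝒜, hindep, hcard, hlength⟩ :=
    ArcSystem.exists_independent (G := G) (W := W) h.2.1.1.1 ht htk ht4
  refine ⟨𝒜, hindep, ?_, hlength⟩
  have hblocks : (c₁ + 24) * (k : ℝ) ^ 2 ≤ (n / (2 * t) : ℕ) + 1 := calc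
    (c₁ + 24) * (k : ℝ) ^ 2 ≤ n / (2 * t : ℕ) := by
        rw [le_div_iff₀ (by positivity)]
        exact_mod_cast htn
    _ ≤ (n / (2 * t) : ℕ) + 1 := by
        rw [← Nat.floor_div_eq_div (K := ℝ)]
        exact (Nat.lt_floor_add_one _).le
  have hproblematic : (2 * k + 1) * G.indepNum + #W ≤ 23 * k ^ 2 := calc
    _ ≤ (2 * k + 1) * k + 20 * k ^ 2 :=
        Nat.add_le_add (Nat.mul_le_mul_left _ h.indepNum_le) h.2.2.2.1
    _ ≤ 23 * k ^ 2 := by nlinarith [h.one_le]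
  have : ((n / (2 * t) : ℕ) : ℝ) ≤ #𝒜.arcs + 23 * (k : ℝ) ^ 2 := by
    exact_mod_cast hcard.trans (Nat.add_le_add_left hproblematic _)
  linarith

end Assumption

/-- For all `c₁, c₂ > 0` there is `c > 0` such that under Assumption (★)
with constant `c`, `G` contains an independent arc-system of size at least `c₁·k²` and
length at least `c₂·k^(1/5)`. -/
theorem statement5 :
    ∀ c₁ c₂ : ℝ, 0 < c₁ → 0 < c₂ →
      ∃ c : ℝ, 0 < c ∧
        ∀ (V : Type) [Fintype V] [DecidableEq V] (G : SimpleGraph V) [DecidableRel G.Adj]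
          (n k : ℕ) (σ : ZMod n → V) (W : Finset V),
          StarAssumption G n k σ W c →
          ∃ 𝒜 : ArcSystem G n k σ W, 𝒜.Independent ∧
            c₁ * (k : ℝ) ^ 2 ≤ (𝒜.arcs.card : ℝ) ∧
            ∀ A ∈ 𝒜.arcs, c₂ * (k : ℝ) ^ ((1 : ℝ) / 5) ≤ (A.card : ℝ) := by
  intro c₁ c₂ hc₁ hc₂
  obtain ⟨k₀, hk₀⟩ := exists_two_mul_natCeil_le hc₂.le
  obtain ⟨N, hN⟩ := exists_forall_not_starAssumption_of_lt k₀
  refine ⟨2 * (c₂ + 1) * (c₁ + 24) + N, by positivity, fun V _ _ G _ n k σ W h => ?_⟩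
  have hk : k₀ ≤ k := not_lt.1 fun hk =>
    hN V G n k σ W _ hk (le_add_of_nonneg_left (by positivity)) h
  set x : ℝ := (k : ℝ) ^ ((1 : ℝ) / 5)
  have hx : 1 ≤ x := Real.one_le_rpow (by exact_mod_cast h.one_le) (by norm_num)
  have hn : (c₁ + 24) * (k : ℝ) ^ 2 * (2 * ⌈c₂ * x⌉₊) ≤ n := calc
    _ ≤ (c₁ + 24) * (k : ℝ) ^ 2 * (2 * ((c₂ + 1) * x)) := by
        gcongr
        exact natCeil_mul_le hc₂.le hx
    _ = 2 * (c₂ + 1) * (c₁ + 24) * ((k : ℝ) ^ 2 * x) := by ring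
    _ ≤ (2 * (c₂ + 1) * (c₁ + 24) + N) * ((k : ℝ) ^ 2 * x) := by
        gcongr
        exact le_add_of_nonneg_right N.cast_nonneg
    _ ≤ n := by
        rw [← rpow_eleven_fifths]
        exact h.2.2.2.2.2
  obtain ⟨𝒜, hindep, hsize, hlength⟩ := h.exists_arcSystem_card_eq hc₁.le
    (Nat.one_le_ceil_iff.2 (by positivity)) (hk₀ k hk h.one_le) hn
  exact ⟨𝒜, hindep, hsize, fun A hA => hlength A hA ▸ Nat.le_ceil _⟩
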